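/- Suppose x and y are I-states of size k in {0,1,…,n} that are not too far. An interval [j+1, j+l] = {j+1, …, j+l} ⊆ {1,…,n} with l ≥ 1 is a generating interval for x and y if and only if there is an index i with 1 ≤ i ≤ n−k such that j = max(h_i^x, h_i^y) and j + l = min(h_{i+1}^x, h_{i+1}^y). -/

import Mathlib

/-- The `i`-th smallest element (0-indexed) of a finite set of natural numbers. -/
def nthElt (s : Finset ℕ) (i : ℕ) : ℕ := (s.sort (· ≤ ·)).getD i 0

/-- The hole set of an I-state: the complement `{0, …, n} \ s`. -/
def holes (n : ℕ) (s : Finset ℕ) : Finset ℕ := Finset.range (n + 1) \ s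

/-- The `i`-th hole (0-indexed): `hnth n s i` is `h_{i+1}^s` in 1-indexed notation. -/
def hnth (n : ℕ) (s : Finset ℕ) (i : ℕ) : ℕ := nthElt (holes n s) i

/-- Two I-states of size `k` are too far if `|x_i − y_i| > 1` for some `i`. -/
def TooFar (k : ℕ) (x y : Finset ℕ) : Prop :=
  ∃ i < k, 1 < ((nthElt x i : ℤ) - (nthElt y i : ℤ)).natAbs

/-- `v_i^x = |x ∩ {i, i+1, …, n}|` (for `x ⊆ {0, …, n}`). -/
def vwt (x : Finset ℕ) (i : ℕ) : ℕ := (x.filter (fun m => i ≤ m)).card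

/-!
Write `c_s(m)` for the number of holes of `s` below `m`. Since `v_m^s + m = |s| + c_s(m)`, the line
`m` is uncrossed exactly when `c_x(m) = c_y(m)`. On the other hand `c_s(m) = i` says that `m` lies
in `(h_i^s, h_{i+1}^s]`. If the regions strictly between `j` and `j + l` are fully used, neither
state has a hole there, so both counts are constant on `(j, j + l]`; if moreover the lines are
uncrossed, the two constants agree, and their common value is the index `i` sought. Given this,
`j` is the larger of the two `i`-th holes exactly when it is a hole of `x` or of `y`, that is, not
fully used, and `j + l` is the smaller of the two `(i + 1)`-st holes exactly when it is not fully
used. Holes are numbered from `1` here; `hnth` numbers them from `0`, so there the common value of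
the counts is `i + 1`.
-/

section CountNth

variable {p q : ℕ → Prop} [DecidablePred p] [DecidablePred q] {a b i m : ℕ}

lemma nth_eq_iff_of_count_succ_eq (h : Nat.count p (a + 1) = i + 1) :
    Nat.nth p i = a ↔ p a := by
  have hi (hf : (Set.ofPred p).Finite) : i < hf.toFinset.card := by
    have := Nat.count_le_card hf (a + 1)
    omega
  constructor
  · rintro rfl
    exact Nat.nth_mem i hi
  · intro ha
    have : Nat.count p a = i := by simpa [Nat.count_succ, ha] using h
    rw [← this, Nat.nth_count ha]

lemma nth_eq_iff_of_count_eq (hi : ∀ hf : (Set.ofPred p).Finite, i < hf.toFinset.card)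
    (h : Nat.count p b = i) :
    Nat.nth p i = b ↔ p b := by
  constructor
  · rintro rfl
    exact Nat.nth_mem i hi
  · intro hb
    rw [← h, Nat.nth_count hb]

lemma count_le_iff_le_nth_of_lt_card
    (hi : ∀ hf : (Set.ofPred p).Finite, i < hf.toFinset.card) :
    Nat.count p m ≤ i ↔ m ≤ Nat.nth p i := by
  refine ⟨fun h => ?_, Nat.le_nth_of_count_le⟩
  by_contra! hlt
  have := Nat.count_strict_mono (Nat.nth_mem i hi) hlt
  rw [Nat.count_nth hi] at this
  omega

lemma count_eq_succ_iff
    (hi : ∀ hf : (Set.ofPred p).Finite, i + 1 < hf.toFinset.card) :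
    Nat.count p m = i + 1 ↔ Nat.nth p i < m ∧ m ≤ Nat.nth p (i + 1) := by
  have hlower := count_le_iff_le_nth_of_lt_card (m := m) fun hf => i.lt_succ_self.trans (hi hf)
  have hupper := count_le_iff_le_nth_of_lt_card (m := m) hi
  omega

lemma count_eq_count_iff_forall_not (hab : a ≤ b) :
    Nat.count p a = Nat.count p b ↔ ∀ m, a ≤ m → m < b → ¬ p m := by
  constructor
  · intro h m ham hmb hm
    exact h.not_lt ((Nat.count_monotone p ham).trans_lt (Nat.count_strict_mono hm hmb))
  · intro h
    refine (Nat.count_monotone p hab).antisymm (not_lt.1 fun hlt => ?_)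
    obtain ⟨m, ⟨ham, hmb⟩, hm⟩ := Nat.exists_of_count_lt_count hlt
    exact h m ham hmb hm

lemma eq_max_nth_iff (hp : Nat.count p (a + 1) = i + 1) (hq : Nat.count q (a + 1) = i + 1) :
    a = max (Nat.nth p i) (Nat.nth q i) ↔ p a ∨ q a := by
  rw [← nth_eq_iff_of_count_succ_eq hp, ← nth_eq_iff_of_count_succ_eq hq]
  have hpa : Nat.nth p i < a + 1 := Nat.nth_lt_of_lt_count (by omega)
  have hqa : Nat.nth q i < a + 1 := Nat.nth_lt_of_lt_count (by omega)
  omega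

lemma eq_min_nth_iff (hip : ∀ hf : (Set.ofPred p).Finite, i < hf.toFinset.card)
    (hiq : ∀ hf : (Set.ofPred q).Finite, i < hf.toFinset.card)
    (hp : Nat.count p b = i) (hq : Nat.count q b = i) :
    b = min (Nat.nth p i) (Nat.nth q i) ↔ p b ∨ q b := by
  rw [← nth_eq_iff_of_count_eq hip hp, ← nth_eq_iff_of_count_eq hiq hq]
  have hpb : b ≤ Nat.nth p i := (count_le_iff_le_nth_of_lt_card hip).1 hp.le
  have hqb : b ≤ Nat.nth q i := (count_le_iff_le_nth_of_lt_card hiq).1 hq.le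
  omega

lemma forall_not_and_count_eq_iff (hab : a < b) :
    ((∀ m, a < m → m < b → ¬ p m ∧ ¬ q m) ∧
      ∀ m, a < m → m ≤ b → Nat.count p m = Nat.count q m) ↔
    ∃ c, ∀ m, a < m → m ≤ b → Nat.count p m = c ∧ Nat.count q m = c := by
  constructor
  · rintro ⟨hgap, heq⟩
    refine ⟨Nat.count p (a + 1), fun m ham hmb => ?_⟩
    have hp : Nat.count p (a + 1) = Nat.count p m :=
      (count_eq_count_iff_forall_not ham).2 fun m' ha hm => (hgap m' ha (hm.trans_le hmb)).1
    exact ⟨hp.symm, (heq m ham hmb).symm.trans hp.symm⟩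
  · rintro ⟨c, hc⟩
    have hend := hc b hab le_rfl
    have hstart := hc (a + 1) a.lt_succ_self hab
    have hp := (count_eq_count_iff_forall_not hab).1 (hstart.1.trans hend.1.symm)
    have hq := (count_eq_count_iff_forall_not hab).1 (hstart.2.trans hend.2.symm)
    exact ⟨fun m ham hmb => ⟨hp m ham hmb, hq m ham hmb⟩,
      fun m ham hmb => (hc m ham hmb).1.trans (hc m ham hmb).2.symm⟩

end CountNth

section NthElt

variable {s t : Finset ℕ} {a b i : ℕ}

lemma card_toFinset_ofPred_mem (hf : (Set.ofPred (· ∈ s)).Finite) :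
    hf.toFinset.card = s.card := by
  congr 1
  ext
  simp

lemma nthElt_eq_nth (s : Finset ℕ) (i : ℕ) : nthElt s i = Nat.nth (· ∈ s) i := by
  have hf : (Set.ofPred (· ∈ s)).Finite := s.finite_toSet
  have hs : hf.toFinset = s := by
    ext
    simp
  rw [Nat.nth_eq_getD_sort hf, hs, nthElt]

lemma count_mem_lt_card (hb : b ∈ s) : Nat.count (· ∈ s) b < s.card := by
  have hf : (Set.ofPred (· ∈ s)).Finite := s.finite_toSet
  simpa only [card_toFinset_ofPred_mem] using Nat.count_lt_card hf hb

theorem exists_eq_max_nthElt_and_eq_min_nthElt_iff (hst : s.card = t.card) (hab : a < b) :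
    (∃ i, i + 1 < s.card ∧ a = max (nthElt s i) (nthElt t i) ∧
      b = min (nthElt s (i + 1)) (nthElt t (i + 1))) ↔
    (a ∈ s ∨ a ∈ t) ∧ (b ∈ s ∨ b ∈ t) ∧
      ∃ c, ∀ m, a < m → m ≤ b → Nat.count (· ∈ s) m = c ∧ Nat.count (· ∈ t) m = c := by
  simp only [nthElt_eq_nth]
  have lt_card {u : Finset ℕ} {i : ℕ} (h : i < u.card) (hf : (Set.ofPred (· ∈ u)).Finite) :
      i < hf.toFinset.card := by rwa [card_toFinset_ofPred_mem]
  constructor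
  · rintro ⟨i, hi, ha, hb⟩
    have hcount (m : ℕ) (ham : a < m) (hmb : m ≤ b) :
        Nat.count (· ∈ s) m = i + 1 ∧ Nat.count (· ∈ t) m = i + 1 := by
      rw [count_eq_succ_iff (lt_card hi), count_eq_succ_iff (lt_card (hst ▸ hi))]
      omega
    obtain ⟨hsa, hta⟩ := hcount (a + 1) a.lt_succ_self hab
    obtain ⟨hsb, htb⟩ := hcount b hab le_rfl
    exact ⟨(eq_max_nth_iff hsa hta).1 ha,
      (eq_min_nth_iff (lt_card hi) (lt_card (hst ▸ hi)) hsb htb).1 hb, i + 1, hcount⟩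
  · rintro ⟨ha, hb, c, hcount⟩
    obtain ⟨hsa, hta⟩ := hcount (a + 1) a.lt_succ_self hab
    obtain ⟨hsb, htb⟩ := hcount b hab le_rfl
    have hpos : 0 < c := by
      rcases ha with ha | ha
      · exact hsa ▸ Nat.count_strict_mono ha a.lt_succ_self |>.pos
      · exact hta ▸ Nat.count_strict_mono ha a.lt_succ_self |>.pos
    have hcard : c < s.card := by
      rcases hb with hb | hb
      · exact hsb ▸ count_mem_lt_card hb
      · exact hst ▸ htb ▸ count_mem_lt_card hb
    obtain ⟨i, rfl⟩ : ∃ i, c = i + 1 := Nat.exists_eq_add_one.2 hpos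
    exact ⟨i, hcard, (eq_max_nth_iff hsa hta).2 ha,
      (eq_min_nth_iff (lt_card hcard) (lt_card (hst ▸ hcard)) hsb htb).2 hb⟩

end NthElt

section Holes

variable {n m j l : ℕ} {x y : Finset ℕ}

lemma mem_holes : m ∈ holes n x ↔ m ≤ n ∧ m ∉ x := by
  rw [holes, Finset.mem_sdiff, Finset.mem_range, Nat.lt_succ_iff]

lemma card_holes (hx : x ⊆ Finset.range (n + 1)) : (holes n x).card = n + 1 - x.card := by
  rw [holes, Finset.card_sdiff_of_subset hx, Finset.card_range]

lemma vwt_add_count_mem (x : Finset ℕ) (m : ℕ) : vwt x m + Nat.count (· ∈ x) m = x.card := by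
  rw [vwt, Nat.count_eq_card_filter_range,
    ← Finset.card_filter_add_card_filter_not (s := x) (fun a => m ≤ a)]
  congr 2
  ext a
  simp [and_comm]

lemma count_mem_add_count_mem_holes (x : Finset ℕ) (hm : m ≤ n + 1) :
    Nat.count (· ∈ x) m + Nat.count (· ∈ holes n x) m = m := by
  rw [Nat.count_eq_card_filter_range, Nat.count_eq_card_filter_range]
  conv_rhs => rw [← Finset.card_range m,
    ← Finset.card_filter_add_card_filter_not (s := Finset.range m) (· ∈ x)]
  congr 2
  refine Finset.filter_congr fun a ha => ?_
  rw [mem_holes, and_iff_right (by rw [Finset.mem_range] at ha; omega)]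

lemma vwt_eq_vwt_iff (hxy : x.card = y.card) (hm : m ≤ n + 1) :
    vwt x m = vwt y m ↔ Nat.count (· ∈ holes n x) m = Nat.count (· ∈ holes n y) m := by
  have hvx := vwt_add_count_mem x m
  have hvy := vwt_add_count_mem y m
  have hcx := count_mem_add_count_mem_holes x hm
  have hcy := count_mem_add_count_mem_holes y hm
  omega

/-- The interval `[j + 1, j + l]` is a generating interval for the I-states `x` and `y`: its two end
regions `j` and `j + l` are not fully used, the regions between them are, and its lines are
uncrossed. The bounds `1 ≤ l` and `j + l ≤ n` are kept as separate hypotheses. -/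
def IsGenInterval (x y : Finset ℕ) (j l : ℕ) : Prop :=
  ¬ (j ∈ x ∧ j ∈ y) ∧ ¬ (j + l ∈ x ∧ j + l ∈ y) ∧
    (∀ m, j < m → m < j + l → m ∈ x ∧ m ∈ y) ∧
    (∀ m, j < m → m ≤ j + l → vwt x m = vwt y m)

lemma not_mem_and_mem_iff_mem_holes_or_mem_holes (hm : m ≤ n) :
    ¬ (m ∈ x ∧ m ∈ y) ↔ m ∈ holes n x ∨ m ∈ holes n y := by
  simp only [mem_holes, hm, true_and, not_and_or]

lemma mem_and_mem_iff_notMem_holes_and_notMem_holes (hm : m ≤ n) :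
    m ∈ x ∧ m ∈ y ↔ m ∉ holes n x ∧ m ∉ holes n y := by
  simp only [mem_holes, hm, true_and, not_not]

lemma isGenInterval_iff_holes (hxy : x.card = y.card) (hl : 1 ≤ l) (hjl : j + l ≤ n) :
    IsGenInterval x y j l ↔
      (j ∈ holes n x ∨ j ∈ holes n y) ∧ (j + l ∈ holes n x ∨ j + l ∈ holes n y) ∧
      ∃ c, ∀ m, j < m → m ≤ j + l →
        Nat.count (· ∈ holes n x) m = c ∧ Nat.count (· ∈ holes n y) m = c := by
  rw [← forall_not_and_count_eq_iff (by omega), IsGenInterval,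
    not_mem_and_mem_iff_mem_holes_or_mem_holes (n := n) (by omega),
    not_mem_and_mem_iff_mem_holes_or_mem_holes hjl]
  refine and_congr_right' (and_congr_right' (and_congr ?_ ?_))
  · exact forall₃_congr fun m _ hm =>
      mem_and_mem_iff_notMem_holes_and_notMem_holes (by omega)
  · exact forall₃_congr fun m _ hm => vwt_eq_vwt_iff hxy (by omega)

end Holes

theorem genInterval_iff_general (n k : ℕ) (x y : Finset ℕ)
    (hx : x ⊆ Finset.range (n + 1)) (hy : y ⊆ Finset.range (n + 1))
    (hxk : x.card = k) (hyk : y.card = k) (j l : ℕ) (hl : 1 ≤ l) (hjl : j + l ≤ n) :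
    IsGenInterval x y j l ↔
      ∃ i < n - k, j = max (hnth n x i) (hnth n y i) ∧
        j + l = min (hnth n x (i + 1)) (hnth n y (i + 1)) := by
  have hcard : (holes n x).card = n + 1 - k := by rw [card_holes hx, hxk]
  have hholes : (holes n x).card = (holes n y).card := by rw [hcard, card_holes hy, hyk]
  have hindex (i : ℕ) : i + 1 < (holes n x).card ↔ i < n - k := by omega
  rw [isGenInterval_iff_holes (hxk.trans hyk.symm) hl hjl,
    ← exists_eq_max_nthElt_and_eq_min_nthElt_iff hholes (by omega)]
  simp only [hindex, hnth]

/-- Characterization of generating intervals: for I-states `x, y` of size `k` that are not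
too far, an interval `[j+1, j+l] ⊆ {1, …, n}` with `l ≥ 1` is a generating interval
(regions `j` and `j+l` not fully used, regions strictly between fully used, and all lines
`j+1, …, j+l` uncrossed) iff `j = max(h_i^x, h_i^y)` and `j + l = min(h_{i+1}^x, h_{i+1}^y)`
for some `1 ≤ i ≤ n − k` (stated with 0-indexed `i < n − k`). -/
theorem genInterval_iff (n k : ℕ) (hkn : k ≤ n) (x y : Finset ℕ)
    (hx : x ⊆ Finset.range (n + 1)) (hy : y ⊆ Finset.range (n + 1))
    (hxk : x.card = k) (hyk : y.card = k) (hfar : ¬ TooFar k x y)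
    (j l : ℕ) (hl : 1 ≤ l) (hjl : j + l ≤ n) :
    (¬ (j ∈ x ∧ j ∈ y) ∧ ¬ (j + l ∈ x ∧ j + l ∈ y) ∧
      (∀ m, j < m → m < j + l → m ∈ x ∧ m ∈ y) ∧
      (∀ m, j < m → m ≤ j + l → vwt x m = vwt y m)) ↔
    ∃ i < n - k, j = max (hnth n x i) (hnth n y i) ∧
      j + l = min (hnth n x (i + 1)) (hnth n y (i + 1)) :=
  genInterval_iff_general n k x y hx hy hxk hyk j l hl hjl
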